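/- Decreasing-then-negative behaviour of the first equation in each variable: define Eq₁(φ, β₁) = K̃ − λ·φ − Σ_{(x,p) : 1 ≤ p, 2p < x ≤ 56} κ̃_{x,p}·(x − 2p)·(1 − 1/(1 + (U/V)^{x−2p}·(1 − V^{−p}))), where K̃ = Σ_{(x,p) : 0 ≤ 2p ≤ x ≤ 56} (x − p)·κ̃_{x,p} and U = U(φ, β₁), V = V(φ, β₁). (i) For each fixed φ ∈ [0.525245, 0.619063], on the open interval I_φ = (2 − 3φ, 3(1 − φ)/2) (i.e. the β₁ with β₃ > 0 and β₂ > 0), there exists β₁^♦ ∈ I_φ such that β₁ ↦ Eq₁(φ, β₁) is strictly decreasing on (2 − 3φ, β₁^♦] ∩ I_φ and Eq₁(φ, β₁) < 0 for all β₁ ∈ [β₁^♦, 3(1 − φ)/2) ∩ I_φ; in particular every zero of Eq₁(φ, ·) in I_φ is < β₁^♦. (ii) Symmetrically, for each fixed β₁ ∈ [0.33018, 0.52891], on the interval J_{β₁} = ((2 − β₁)/3, 1 − 2β₁/3) there exists φ^♦ ∈ J_{β₁} such that φ ↦ Eq₁(φ, β₁) is strictly decreasing on ((2 − β₁)/3,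 φ^♦] ∩ J_{β₁} and Eq₁(φ, β₁) < 0 for all φ ∈ [φ^♦, 1 − 2β₁/3) ∩ J_{β₁}. -/

import Mathlib

/-- `U(φ, β₁) = 9(1−φ)β₃/(Y β₂)` where `β₂ = 3(1−φ) − 2β₁`, `β₃ = β₁ − 2 + 3φ`,
`Y = 3φ − β₁`. -/
noncomputable def Ufun (φ β₁ : ℝ) : ℝ :=
  9 * (1 - φ) * (β₁ - 2 + 3 * φ) / ((3 * φ - β₁) * (3 * (1 - φ) - 2 * β₁))

/-- `V(φ, β₁) = 1 + β₂²/(3 Y β₃)`. -/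
noncomputable def Vfun (φ β₁ : ℝ) : ℝ :=
  1 + (3 * (1 - φ) - 2 * β₁) ^ 2 / (3 * (3 * φ - β₁) * (β₁ - 2 + 3 * φ))

/-- The constraint polygon `D` for the pair `(φ, β₁)`. -/
def Dset : Set (ℝ × ℝ) :=
  {q | 0.525245 ≤ q.1 ∧ q.1 ≤ 0.619063 ∧ 0.33018 ≤ q.2 ∧ q.2 ≤ 0.52891 ∧
    0.33018 ≤ 3 * (1 - q.1) - 2 * q.2 ∧ 3 * (1 - q.1) - 2 * q.2 ≤ 0.52891 ∧
    0.077639 ≤ q.2 - 2 + 3 * q.1 ∧ q.2 - 2 + 3 * q.1 ≤ 0.21782}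

/-- `κ_{x,p}` for `λ = 3·4.506 = 13.518`. -/
noncomputable def kappa (x p : ℕ) : ℝ :=
  (2 : ℝ) ^ (-(x : ℝ)) * (Nat.choose x p : ℝ) *
    (Real.exp (-(13.518 : ℝ)) * (13.518 : ℝ) ^ x / (Nat.factorial x : ℝ))

/-- `κ̃_{x,p}`: `2κ_{x,p}` if `x > 2p`, `κ_{x,p}` if `x = 2p`, `0` if `x < 2p`. -/
noncomputable def kappaT (x p : ℕ) : ℝ :=
  if x < 2 * p then 0 else if 2 * p < x then 2 * kappa x p else kappa x p

/-- `K̃ = Σ_{0 ≤ 2p ≤ x ≤ 56} (x − p)·κ̃_{x,p}`. -/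
noncomputable def Ktilde : ℝ :=
  ∑ x ∈ Finset.range 57, ∑ p ∈ Finset.range (x + 1),
    if 2 * p ≤ x then ((x : ℝ) - (p : ℝ)) * kappaT x p else 0

/-- The first equation `Eq₁` (with `λ = 13.518`, `x_max = 56`). -/
noncomputable def Eq1 (φ β₁ : ℝ) : ℝ :=
  Ktilde - 13.518 * φ -
    ∑ x ∈ Finset.range 57, ∑ p ∈ Finset.range (x + 1),
      if 1 ≤ p ∧ 2 * p < x then
        kappaT x p * ((x : ℝ) - 2 * (p : ℝ)) *
          (1 - 1 / (1 + (Ufun φ β₁ / Vfun φ β₁) ^ (x - 2 * p) *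
            (1 - (Vfun φ β₁) ^ (-(p : ℤ)))))
      else 0

/-!
Put `q = β₂/(Y − β₂) ∈ (0, 1)` and `r = U/V`. Then `V⁻¹ = 1 − q²`, and `r q = (a + b q)(1 − q)²`
where `a, b` depend only on the variable that is held fixed; `q` decreases in the other one.

A factor `(U/V)^d (1 − V^{−p})` of `Eq₁` is `r^{d−1} (∑_{i<p} (1 − q²)^i) · r q²`, so for `d ≥ 1` it
increases whenever `q` decreases and `r q²` increases. The derivative of
`r q² = (a + b q)(1 − q)² q` with respect to `q` is `1 − q` times a quadratic, negative for `q` to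
the right of its positive root. Hence `Eq₁` is strictly decreasing as long as `q ≥ c`, where
`c = 0.367`, just above `(√3 − 1)/2`, works for every fixed `φ`, and `c = 0.46` for every fixed
`β₁ ≥ 0.33018`.

For `q ≤ c` the cubic `(a + b q)(1 − q)²` is at least its value at `c`, which bounds `r q` below;
the factors with `d ≥ 2` increase with `r q` and decrease with `q`, so the sum in `Eq₁` is at least
a rational number, large enough to make `Eq₁` negative.
-/

open Finset

section Odds

/-- The quantity `1 - 1/(1+a) = a/(1+a)`: the probability of an event with odds `a`. -/
def saturate {K : Type*} [Field K] (a : K) : K := 1 - 1 / (1 + a)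

/-- The quantity `(U/V)^d (1 - V^{-p})` of `Eq1`, written with `r = U/V` and `V⁻¹ = 1 - q²`. -/
def odds {K : Type*} [CommRing K] (r q : K) (d p : ℕ) : K := r ^ d * (1 - (1 - q ^ 2) ^ p)

theorem odds_add_eq_mul_geom_sum {K : Type*} [CommRing K] (r q : K) (e k p : ℕ) :
    odds r q (e + k) p = r ^ e * (∑ i ∈ range p, (1 - q ^ 2) ^ i) * (r ^ k * q ^ 2) := by
  rw [odds, ← mul_neg_geom_sum, pow_add]
  ring

variable {K : Type*} [Field K] [LinearOrder K] [IsStrictOrderedRing K]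

theorem saturate_strictMonoOn : StrictMonoOn (saturate : K → K) (Set.Ici 0) := fun _ ha _ _ hab =>
  sub_lt_sub_left (one_div_lt_one_div_of_lt (add_pos_of_pos_of_nonneg one_pos ha)
    (add_lt_add_right hab 1)) 1

theorem saturate_nonneg {a : K} (ha : 0 ≤ a) : 0 ≤ saturate a := by
  simpa [saturate] using saturate_strictMonoOn.monotoneOn Set.self_mem_Ici ha ha

variable {r q R Q : K} {d k p : ℕ}

theorem odds_nonneg (hr : 0 ≤ r) (hq : 0 ≤ q) (hq1 : q ≤ 1) : 0 ≤ odds r q d p := by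
  have hq2 : q ^ 2 ≤ 1 := pow_le_one₀ hq hq1
  exact mul_nonneg (pow_nonneg hr d)
    (sub_nonneg.2 (pow_le_one₀ (sub_nonneg.2 hq2) (sub_le_self 1 (sq_nonneg q))))

theorem le_of_pow_mul_sq_le (hk : k ≠ 0) (hr : 0 ≤ r) (hq : 0 < q) (hqQ : q ≤ Q)
    (h : R ^ k * Q ^ 2 ≤ r ^ k * q ^ 2) : R ≤ r := by
  have hQ : 0 < Q := hq.trans_le hqQ
  refine le_of_pow_le_pow_left₀ hk hr (le_of_mul_le_mul_right (h.trans ?_) (pow_pos hQ 2))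
  gcongr

theorem pow_mul_geom_sum_le (hR : 0 ≤ R) (hRr : R ≤ r) (hq : 0 ≤ q) (hqQ : q ≤ Q) (hQ : Q ≤ 1)
    (e : ℕ) :
    R ^ e * ∑ i ∈ range p, (1 - Q ^ 2) ^ i ≤ r ^ e * ∑ i ∈ range p, (1 - q ^ 2) ^ i := by
  have hQ2 : 0 ≤ 1 - Q ^ 2 := sub_nonneg.2 (pow_le_one₀ (hq.trans hqQ) hQ)
  have hr : 0 ≤ r := hR.trans hRr
  gcongr

theorem odds_le_odds (hk : k ≠ 0) (hkd : k ≤ d) (hR : 0 ≤ R) (hr : 0 ≤ r) (hq : 0 < q)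
    (hqQ : q ≤ Q) (hQ : Q ≤ 1) (h : R ^ k * Q ^ 2 ≤ r ^ k * q ^ 2) :
    odds R Q d p ≤ odds r q d p := by
  have hRr := le_of_pow_mul_sq_le hk hr hq hqQ h
  have hq2 : q ^ 2 ≤ 1 := pow_le_one₀ hq.le (hqQ.trans hQ)
  obtain ⟨e, rfl⟩ := Nat.exists_eq_add_of_le' hkd
  rw [odds_add_eq_mul_geom_sum, odds_add_eq_mul_geom_sum]
  exact mul_le_mul (pow_mul_geom_sum_le hR hRr hq.le hqQ hQ e) h (by positivity)
    (mul_nonneg (pow_nonneg hr e)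
      (sum_nonneg fun i _ => pow_nonneg (sub_nonneg.2 hq2) i))

theorem odds_lt_odds (hk : k ≠ 0) (hkd : k ≤ d) (hp : p ≠ 0) (hR : 0 < R) (hr : 0 ≤ r)
    (hq : 0 < q) (hqQ : q ≤ Q) (hQ : Q < 1) (h : R ^ k * Q ^ 2 < r ^ k * q ^ 2) :
    odds R Q d p < odds r q d p := by
  have hRr := le_of_pow_mul_sq_le hk hr hq hqQ h.le
  have hQ2 : 0 < 1 - Q ^ 2 := sub_pos.2 (pow_lt_one₀ (hq.le.trans hqQ) hQ two_ne_zero)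
  have hsum : 0 < ∑ i ∈ range p, (1 - Q ^ 2) ^ i :=
    sum_pos (fun i _ => pow_pos hQ2 i) (nonempty_range_iff.2 hp)
  obtain ⟨e, rfl⟩ := Nat.exists_eq_add_of_le' hkd
  rw [odds_add_eq_mul_geom_sum, odds_add_eq_mul_geom_sum]
  exact mul_lt_mul' (pow_mul_geom_sum_le hR.le hRr hq.le hqQ hQ.le e) h (by positivity)
    ((mul_pos (pow_pos hR e) hsum).trans_le (pow_mul_geom_sum_le hR.le hRr hq.le hqQ hQ.le e))

end Odds

section Cubic

variable {a b c : ℝ}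

theorem strictAntiOn_cubic_mul_self (ha : 0 < a) (hb : 0 ≤ b) (hc : 0 ≤ c)
    (h : a + (2 * b - 3 * a) * c - 4 * b * c ^ 2 ≤ 0) :
    StrictAntiOn (fun x => (a + b * x) * (1 - x) ^ 2 * x) (Set.Icc c 1) := by
  have hderiv (x : ℝ) : HasDerivAt (fun x => (a + b * x) * (1 - x) ^ 2 * x)
      ((1 - x) * (a + (2 * b - 3 * a) * x - 4 * b * x ^ 2)) x := by
    have hx := hasDerivAt_id' x
    have hfactor := ((hx.const_mul b).const_add a).fun_mul ((hx.const_sub 1).fun_pow 2)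
    refine (hfactor.fun_mul hx).congr_deriv ?_
    push_cast
    ring
  refine strictAntiOn_of_deriv_neg (convex_Icc c 1)
    (fun x _ => (hderiv x).continuousAt.continuousWithinAt) fun x hx => ?_
  rw [interior_Icc] at hx
  rw [(hderiv x).deriv]
  refine mul_neg_of_pos_of_neg (sub_pos.2 hx.2) (neg_of_mul_neg_right ?_ hc)
  have hx0 : 0 < x := hc.trans_lt hx.1
  calc c * (a + (2 * b - 3 * a) * x - 4 * b * x ^ 2)
      = x * (a + (2 * b - 3 * a) * c - 4 * b * c ^ 2) - (x - c) * (a + 4 * b * x * c) := by ring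
    _ < 0 := by
      have hleft := mul_nonpos_of_nonneg_of_nonpos hx0.le h
      have hright : 0 < (x - c) * (a + 4 * b * x * c) :=
        mul_pos (sub_pos.2 hx.1) (by positivity)
      linarith

theorem cubic_le_cubic_of_le_value_zero {x : ℝ} (ha : 0 ≤ a) (hb : 0 ≤ b) (hx : 0 ≤ x)
    (hxc : x ≤ c) (hc : c ≤ 1) (h : (a + b * c) * (1 - c) ^ 2 ≤ a) :
    (a + b * c) * (1 - c) ^ 2 ≤ (a + b * x) * (1 - x) ^ 2 := by
  rcases (hx.trans hxc).eq_or_lt with rfl | hc0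
  · rw [le_antisymm hxc hx]
  have hzero : 0 ≤ a * (2 - c) - b * (1 - c) ^ 2 :=
    nonneg_of_mul_nonneg_right (by linarith) hc0
  have hvalue : 0 ≤ 2 * (a + b * c) * (1 - c) - b * (1 - c) ^ 2 := by
    by_contra! hneg
    have hlt : 2 * (a + b * c) < b * (1 - c) :=
      lt_of_mul_lt_mul_right (by linarith) (sub_nonneg.2 hc)
    have hle : 2 * b * (1 - c) ≤ a := le_of_mul_le_mul_left (by linarith) hc0
    linarith [mul_nonneg hb hc0.le]
  -- The cofactor of `c - x` in the difference of the two sides is concave in `x`, so on `[0, c]` it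
  -- lies above the chord through its values at `0` and `c`.
  have hchord : 0 ≤ c * ((a + b * x) * (2 - x - c) - b * (1 - c) ^ 2) := by
    calc 0 ≤ (c - x) * (a * (2 - c) - b * (1 - c) ^ 2) +
          x * (2 * (a + b * c) * (1 - c) - b * (1 - c) ^ 2) + b * (c * x * (c - x)) := by
          have := sub_nonneg.2 hxc
          positivity
      _ = _ := by ring
  linarith [mul_nonneg (sub_nonneg.2 hxc) (nonneg_of_mul_nonneg_right hchord hc0)]

end Cubic

section Numerics

/-- `e^λ κ_{x,p}` for `p ≤ x`, a rational number since `λ/2 = 6.759`. -/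
def kappaQ (x p : ℕ) : ℚ := 6.759 ^ x / (p.factorial * (x - p).factorial)

/-- `e^λ κ̃_{x,p}`. -/
def kappaTQ (x p : ℕ) : ℚ :=
  if x < 2 * p then 0 else if 2 * p < x then 2 * kappaQ x p else kappaQ x p

/-- `e^λ K̃`. -/
def KtildeQ : ℚ :=
  ∑ x ∈ range 57, ∑ p ∈ range (x + 1), if 2 * p ≤ x then ((x : ℚ) - p) * kappaTQ x p else 0

/-- Rounding down to three decimals; it keeps the denominators in `lowerSumQ` small enough for
the kernel to evaluate the sum. -/
def roundDown (v : ℚ) : ℚ := ⌊v * 1000⌋ / 1000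

/-- A rational lower bound for `e^λ` times the sum in `Eq1`. The terms with `x - 2p = 1` are
dropped because a lower bound on `(U/V) q` only controls the powers `(U/V)^d` with `d ≥ 2`, the
terms with `x ≥ 25` because they are small. -/
def lowerSumQ (R Q : ℚ) : ℚ :=
  ∑ x ∈ range 25, ∑ p ∈ range (x + 1),
    if 1 ≤ p ∧ 2 * p + 2 ≤ x then
      kappaTQ x p * ((x : ℚ) - 2 * p) * roundDown (saturate (odds R Q (x - 2 * p) p))
    else 0

theorem roundDown_le (v : ℚ) : roundDown v ≤ v :=
  (div_le_iff₀ (by norm_num)).2 (Int.floor_le _)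

theorem lt_exp_lambda : (742000 : ℝ) < Real.exp 13.518 := by
  have hfrac : (1.678 : ℝ) ≤ Real.exp 0.518 := by
    refine le_trans ?_ (Real.sum_le_exp_of_nonneg (by norm_num) 7)
    norm_num [sum_range_succ, Nat.factorial]
  calc (742000 : ℝ) < 2.7182818283 ^ 13 * 1.678 := by norm_num
    _ ≤ Real.exp 1 ^ 13 * Real.exp 0.518 := by
      gcongr
      exact Real.exp_one_gt_d9.le
    _ = Real.exp 13.518 := by
      rw [← Real.exp_nat_mul, ← Real.exp_add]
      norm_num

theorem kappa_eq {x p : ℕ} (hp : p ≤ x) : kappa x p = Real.exp (-13.518) * kappaQ x p := by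
  have hpow : (13.518 : ℝ) ^ x = 2 ^ x * 6.759 ^ x := by
    rw [← mul_pow]
    norm_num
  rw [kappa, kappaQ, Nat.cast_choose ℝ hp, Real.rpow_neg two_pos.le, Real.rpow_natCast, hpow]
  push_cast
  field_simp

theorem kappaT_eq (x p : ℕ) : kappaT x p = Real.exp (-13.518) * kappaTQ x p := by
  rw [kappaT, kappaTQ]
  split_ifs with hlt hgt
  · simp
  · rw [kappa_eq (by omega)]
    push_cast
    ring
  · rw [kappa_eq (by omega)]

theorem kappaTQ_pos {x p : ℕ} (h : 2 * p < x) : 0 < kappaTQ x p := by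
  rw [kappaTQ, if_neg (by omega), if_pos h, kappaQ]
  positivity

theorem Ktilde_eq : Ktilde = Real.exp (-13.518) * KtildeQ := by
  simp only [Ktilde, KtildeQ, kappaT_eq, Rat.cast_sum, mul_sum]
  refine sum_congr rfl fun x _ => sum_congr rfl fun p _ => ?_
  split_ifs
  · push_cast
    ring
  · simp

end Numerics

section ReducedSum

/-- The sum in `Eq1` as a function of `r = U/V` and `q`, where `V⁻¹ = 1 - q²`. -/
noncomputable def reducedSum (r q : ℝ) : ℝ :=
  ∑ x ∈ range 57, ∑ p ∈ range (x + 1),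
    if 1 ≤ p ∧ 2 * p < x then
      kappaT x p * ((x : ℝ) - 2 * p) * saturate (odds r q (x - 2 * p) p)
    else 0

theorem kappaT_mul_sub_pos {x p : ℕ} (h : 2 * p < x) : 0 < kappaT x p * ((x : ℝ) - 2 * p) := by
  have hκ : (0 : ℝ) < kappaTQ x p := by exact_mod_cast kappaTQ_pos h
  have hx : (2 * p : ℝ) < x := by exact_mod_cast h
  rw [kappaT_eq]
  exact mul_pos (mul_pos (Real.exp_pos _) hκ) (sub_pos.2 hx)

variable {r q : ℝ}

theorem reducedSum_lt_reducedSum {r' q' : ℝ} (hr' : 0 < r') (hr : 0 ≤ r) (hq : 0 < q)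
    (hqq' : q ≤ q') (hq' : q' < 1) (h : r' * q' ^ 2 < r * q ^ 2) :
    reducedSum r' q' < reducedSum r q := by
  have hterm {x p : ℕ} (hp : 1 ≤ p) (hx : 2 * p < x) :
      kappaT x p * ((x : ℝ) - 2 * p) * saturate (odds r' q' (x - 2 * p) p) <
        kappaT x p * ((x : ℝ) - 2 * p) * saturate (odds r q (x - 2 * p) p) := by
    refine mul_lt_mul_of_pos_left (saturate_strictMonoOn ?_ ?_ ?_) (kappaT_mul_sub_pos hx)
    · exact odds_nonneg hr'.le (hq.le.trans hqq') hq'.le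
    · exact odds_nonneg hr hq.le (hqq'.trans hq'.le)
    · exact odds_lt_odds one_ne_zero (by omega) (by omega) hr' hr hq hqq' hq' (by simpa using h)
  have hle (x p : ℕ) :
      (if 1 ≤ p ∧ 2 * p < x then
        kappaT x p * ((x : ℝ) - 2 * p) * saturate (odds r' q' (x - 2 * p) p) else 0) ≤
      if 1 ≤ p ∧ 2 * p < x then
        kappaT x p * ((x : ℝ) - 2 * p) * saturate (odds r q (x - 2 * p) p) else 0 := by
    split_ifs with hpx
    exacts [(hterm hpx.1 hpx.2).le, le_rfl]
  refine sum_lt_sum (fun x _ => sum_le_sum fun p _ => hle x p)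
    ⟨3, by simp, sum_lt_sum (fun p _ => hle 3 p) ⟨1, by simp, ?_⟩⟩
  rw [if_pos (by norm_num), if_pos (by norm_num)]
  exact hterm le_rfl (by norm_num)

theorem exp_mul_lowerSumQ_le_reducedSum {R Q : ℚ} (hR : 0 ≤ R) (hQ : Q ≤ 1) (hr : 0 ≤ r)
    (hq : 0 < q) (hqQ : q ≤ Q) (h : R * Q ≤ r * q) :
    Real.exp (-13.518) * lowerSumQ R Q ≤ reducedSum r q := by
  have hR' : (0 : ℝ) ≤ R := by exact_mod_cast hR
  have hQ' : (Q : ℝ) ≤ 1 := by exact_mod_cast hQ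
  have hQ0 : (0 : ℝ) ≤ Q := hq.le.trans hqQ
  have hsat {d p : ℕ} (hd : 2 ≤ d) :
      (roundDown (saturate (odds R Q d p)) : ℝ) ≤ saturate (odds r q d p) := calc
    _ ≤ ((saturate (odds R Q d p) : ℚ) : ℝ) := by exact_mod_cast roundDown_le _
    _ = saturate (odds (R : ℝ) Q d p) := by simp [saturate, odds]
    _ ≤ saturate (odds r q d p) := by
      refine saturate_strictMonoOn.monotoneOn (odds_nonneg hR' hQ0 hQ')
        (odds_nonneg hr hq.le (hqQ.trans hQ')) (odds_le_odds two_ne_zero hd hR' hr hq hqQ hQ' ?_)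
      rw [← mul_pow, ← mul_pow]
      gcongr
  have hnonneg (x p : ℕ) : 0 ≤ if 1 ≤ p ∧ 2 * p < x then
      kappaT x p * ((x : ℝ) - 2 * p) * saturate (odds r q (x - 2 * p) p) else 0 := by
    split_ifs with hpx
    · exact mul_nonneg (kappaT_mul_sub_pos hpx.2).le
        (saturate_nonneg (odds_nonneg hr hq.le (hqQ.trans hQ')))
    · exact le_rfl
  simp only [lowerSumQ, Rat.cast_sum, mul_sum]
  refine (sum_le_sum fun x _ => sum_le_sum fun p _ => ?_).trans
    (sum_le_sum_of_subset_of_nonneg (range_mono (by norm_num : 25 ≤ 57))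
      fun x _ _ => sum_nonneg fun p _ => hnonneg x p)
  by_cases hpx : 1 ≤ p ∧ 2 * p + 2 ≤ x
  · rw [if_pos hpx, if_pos ⟨hpx.1, by omega⟩]
    calc _ = kappaT x p * ((x : ℝ) - 2 * p) *
          (roundDown (saturate (odds R Q (x - 2 * p) p)) : ℝ) := by
          rw [kappaT_eq]
          push_cast
          ring
      _ ≤ _ := mul_le_mul_of_nonneg_left (hsat (by omega)) (kappaT_mul_sub_pos (by omega)).le
  · simpa only [if_neg hpx, Rat.cast_zero, mul_zero] using hnonneg x p

end ReducedSum

section Coordinates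

/-- The conditions `β₂ > 0` and `β₃ > 0`. -/
structure Admissible (φ β : ℝ) : Prop where
  beta2_pos : 0 < 3 * (1 - φ) - 2 * β
  beta3_pos : 0 < β - 2 + 3 * φ

/-- The coordinate `q = β₂ / (Y - β₂)`, for which `V⁻¹ = 1 - q²`. -/
noncomputable def qCoord (φ β : ℝ) : ℝ := (3 * (1 - φ) - 2 * β) / (β - 3 + 6 * φ)

/-- The solution `β` of `qCoord φ β = c`. -/
noncomputable def betaOfQ (φ c : ℝ) : ℝ := (3 * (1 - φ) - c * (6 * φ - 3)) / (2 + c)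

/-- The solution `φ` of `qCoord φ β = c`. -/
noncomputable def phiOfQ (β c : ℝ) : ℝ := (3 + 3 * c - (2 + c) * β) / (3 + 6 * c)

variable {φ β c : ℝ}

theorem admissible_iff_beta_mem_Ioo :
    Admissible φ β ↔ β ∈ Set.Ioo (2 - 3 * φ) (3 * (1 - φ) / 2) :=
  ⟨fun h => ⟨by linarith [h.beta3_pos], by linarith [h.beta2_pos]⟩,
    fun h => ⟨by linarith [h.2], by linarith [h.1]⟩⟩

theorem admissible_iff_phi_mem_Ioo :
    Admissible φ β ↔ φ ∈ Set.Ioo ((2 - β) / 3) (1 - 2 * β / 3) :=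
  ⟨fun h => ⟨by linarith [h.beta3_pos], by linarith [h.beta2_pos]⟩,
    fun h => ⟨by linarith [h.2], by linarith [h.1]⟩⟩

theorem betaOfQ_mem_Ioo (hφ : 1 / 3 < φ) (hc : 0 < c) (hc1 : c < 1) :
    betaOfQ φ c ∈ Set.Ioo (2 - 3 * φ) (3 * (1 - φ) / 2) := by
  have hc2 : 0 < 2 + c := by linarith
  constructor
  · rw [betaOfQ, lt_div_iff₀ hc2]
    linarith [mul_pos (sub_pos.2 hφ) (sub_pos.2 hc1)]
  · rw [betaOfQ, div_lt_iff₀ hc2]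
    linarith [mul_pos (sub_pos.2 hφ) hc]

theorem phiOfQ_mem_Ioo (hβ : β < 1) (hc : 0 < c) (hc1 : c < 1) :
    phiOfQ β c ∈ Set.Ioo ((2 - β) / 3) (1 - 2 * β / 3) := by
  have hc2 : 0 < 3 + 6 * c := by linarith
  constructor
  · rw [phiOfQ, lt_div_iff₀ hc2]
    linarith [mul_pos (sub_pos.2 hβ) (sub_pos.2 hc1)]
  · rw [phiOfQ, div_lt_iff₀ hc2]
    linarith [mul_pos (sub_pos.2 hβ) hc]

namespace Admissible

theorem phi_gt (h : Admissible φ β) : 1 / 3 < φ := by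
  linarith [h.beta2_pos, h.beta3_pos]

theorem beta_lt_one (h : Admissible φ β) : β < 1 := by
  linarith [h.beta2_pos, h.beta3_pos]

theorem denom_pos (h : Admissible φ β) : 0 < β - 3 + 6 * φ := by
  linarith [h.beta2_pos, h.beta3_pos]

theorem qCoord_pos (h : Admissible φ β) : 0 < qCoord φ β := div_pos h.beta2_pos h.denom_pos

theorem one_sub_qCoord (h : Admissible φ β) :
    1 - qCoord φ β = 3 * (β - 2 + 3 * φ) / (β - 3 + 6 * φ) := by
  rw [qCoord, one_sub_div h.denom_pos.ne']
  ring

theorem two_add_qCoord (h : Admissible φ β) :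
    2 + qCoord φ β = 3 * (3 * φ - 1) / (β - 3 + 6 * φ) := by
  rw [qCoord, add_div' _ _ _ h.denom_pos.ne']
  ring

theorem one_add_two_mul_qCoord (h : Admissible φ β) :
    1 + 2 * qCoord φ β = 3 * (1 - β) / (β - 3 + 6 * φ) := by
  rw [qCoord, mul_div_assoc', add_comm, div_add' _ _ _ h.denom_pos.ne']
  ring

theorem qCoord_lt_one (h : Admissible φ β) : qCoord φ β < 1 := by
  rw [← sub_pos, h.one_sub_qCoord]
  exact div_pos (mul_pos three_pos h.beta3_pos) h.denom_pos

theorem qCoord_le_iff_betaOfQ_le (h : Admissible φ β) (hc : 0 ≤ c) :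
    qCoord φ β ≤ c ↔ betaOfQ φ c ≤ β := by
  rw [qCoord, betaOfQ, div_le_iff₀ h.denom_pos, div_le_iff₀ (by linarith)]
  constructor <;> intro <;> linarith

theorem le_qCoord_iff_le_betaOfQ (h : Admissible φ β) (hc : 0 ≤ c) :
    c ≤ qCoord φ β ↔ β ≤ betaOfQ φ c := by
  rw [qCoord, betaOfQ, le_div_iff₀ h.denom_pos, le_div_iff₀ (by linarith)]
  constructor <;> intro <;> linarith

theorem qCoord_le_iff_phiOfQ_le (h : Admissible φ β) (hc : 0 ≤ c) :
    qCoord φ β ≤ c ↔ phiOfQ β c ≤ φ := by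
  rw [qCoord, phiOfQ, div_le_iff₀ h.denom_pos, div_le_iff₀ (by linarith)]
  constructor <;> intro <;> linarith

theorem le_qCoord_iff_le_phiOfQ (h : Admissible φ β) (hc : 0 ≤ c) :
    c ≤ qCoord φ β ↔ φ ≤ phiOfQ β c := by
  rw [qCoord, phiOfQ, le_div_iff₀ h.denom_pos, le_div_iff₀ (by linarith)]
  constructor <;> intro <;> linarith

theorem Vfun_eq (h : Admissible φ β) :
    Vfun φ β = (β - 3 + 6 * φ) ^ 2 / (3 * (3 * φ - β) * (β - 2 + 3 * φ)) := by
  have hY : 0 < 3 * φ - β := by linarith [h.beta2_pos, h.beta3_pos]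
  rw [Vfun, one_add_div (mul_pos (mul_pos three_pos hY) h.beta3_pos).ne']
  ring

theorem inv_Vfun (h : Admissible φ β) : (Vfun φ β)⁻¹ = 1 - qCoord φ β ^ 2 := by
  rw [h.Vfun_eq, qCoord, inv_div, div_pow, one_sub_div (pow_pos h.denom_pos 2).ne']
  ring

theorem Ufun_div_Vfun (h : Admissible φ β) :
    Ufun φ β / Vfun φ β =
      27 * (1 - φ) * (β - 2 + 3 * φ) ^ 2 /
        ((3 * (1 - φ) - 2 * β) * (β - 3 + 6 * φ) ^ 2) := by
  have hβ₂ := h.beta2_pos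
  have hβ₃ := h.beta3_pos
  have hD := h.denom_pos
  have hY : 0 < 3 * φ - β := by linarith
  rw [h.Vfun_eq, Ufun, div_div_div_eq, div_eq_div_iff (by positivity) (by positivity)]
  ring

theorem Ufun_div_Vfun_pos (h : Admissible φ β) (hφ : φ < 1) : 0 < Ufun φ β / Vfun φ β := by
  have hβ₂ := h.beta2_pos
  have hβ₃ := h.beta3_pos
  have hD := h.denom_pos
  have := sub_pos.2 hφ
  rw [h.Ufun_div_Vfun]
  positivity

theorem Ufun_div_Vfun_mul_qCoord (h : Admissible φ β) :
    Ufun φ β / Vfun φ β * qCoord φ β =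
      3 * (1 - φ) / (β - 3 + 6 * φ) * (1 - qCoord φ β) ^ 2 := by
  have hβ₂ := h.beta2_pos
  have hD := h.denom_pos
  rw [h.Ufun_div_Vfun, h.one_sub_qCoord, qCoord, div_pow, div_mul_div_comm, div_mul_div_comm,
    div_eq_div_iff (by positivity) (by positivity)]
  ring

theorem Ufun_div_Vfun_mul_qCoord_eq_cubic_of_phi (h : Admissible φ β) :
    Ufun φ β / Vfun φ β * qCoord φ β =
      (2 * ((1 - φ) / (3 * φ - 1)) + (1 - φ) / (3 * φ - 1) * qCoord φ β) *
        (1 - qCoord φ β) ^ 2 := by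
  have hφ : 3 * φ - 1 ≠ 0 := by linarith [h.phi_gt]
  have hcoeff : 3 * (1 - φ) / (β - 3 + 6 * φ) =
      (1 - φ) / (3 * φ - 1) * (2 + qCoord φ β) := by
    rw [h.two_add_qCoord, mul_comm 3 (1 - φ), mul_comm 3 (3 * φ - 1), mul_div_assoc,
      mul_div_assoc, ← mul_assoc, div_mul_cancel₀ _ hφ]
  rw [h.Ufun_div_Vfun_mul_qCoord, hcoeff]
  ring

theorem Ufun_div_Vfun_mul_qCoord_eq_cubic_of_beta (h : Admissible φ β) :
    Ufun φ β / Vfun φ β * qCoord φ β =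
      (2 * β / (3 * (1 - β)) + (1 + 2 * (2 * β / (3 * (1 - β)))) * qCoord φ β) *
        (1 - qCoord φ β) ^ 2 := by
  have hβ : 3 * (1 - β) ≠ 0 := by linarith [h.beta_lt_one]
  have hcoeff : 3 * (1 - φ) / (β - 3 + 6 * φ) =
      2 * β / (3 * (1 - β)) * (1 + 2 * qCoord φ β) + qCoord φ β := by
    rw [h.one_add_two_mul_qCoord, ← mul_div_assoc, div_mul_cancel₀ _ hβ, qCoord, ← add_div]
    ring
  rw [h.Ufun_div_Vfun_mul_qCoord, hcoeff]
  ring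

theorem Eq1_eq (h : Admissible φ β) :
    Eq1 φ β = Ktilde - 13.518 * φ - reducedSum (Ufun φ β / Vfun φ β) (qCoord φ β) := by
  simp only [Eq1, reducedSum, saturate, odds, zpow_neg, zpow_natCast, ← inv_pow, h.inv_Vfun]

end Admissible

theorem qCoord_strictAntiOn_beta : StrictAntiOn (qCoord φ) {β | Admissible φ β} :=
  fun _ hs _ _ hst => div_lt_div₀ (by linarith) (by linarith) hs.beta2_pos.le hs.denom_pos

theorem qCoord_strictAntiOn_phi : StrictAntiOn (fun φ => qCoord φ β) {φ | Admissible φ β} :=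
  fun _ hs _ _ hst => div_lt_div₀ (by linarith) (by linarith) hs.beta2_pos.le hs.denom_pos

end Coordinates

section Comparison

variable {φ β a b : ℝ}

theorem Eq1_lt_Eq1_of_cubic {φ' β' c : ℝ} (h : Admissible φ β) (h' : Admissible φ' β')
    (hφ : φ ≤ φ') (hφ' : φ' < 1) (hq : qCoord φ' β' < qCoord φ β) (hcq : c ≤ qCoord φ' β')
    (ha : 0 < a) (hb : 0 ≤ b) (hc : 0 ≤ c)
    (hquad : a + (2 * b - 3 * a) * c - 4 * b * c ^ 2 ≤ 0)
    (hcubic : Ufun φ β / Vfun φ β * qCoord φ β =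
      (a + b * qCoord φ β) * (1 - qCoord φ β) ^ 2)
    (hcubic' : Ufun φ' β' / Vfun φ' β' * qCoord φ' β' =
      (a + b * qCoord φ' β') * (1 - qCoord φ' β') ^ 2) :
    Eq1 φ' β' < Eq1 φ β := by
  have hr : Ufun φ β / Vfun φ β * qCoord φ β ^ 2 <
      Ufun φ' β' / Vfun φ' β' * qCoord φ' β' ^ 2 := by
    rw [pow_two, pow_two, ← mul_assoc, ← mul_assoc, hcubic, hcubic']
    exact strictAntiOn_cubic_mul_self ha hb hc hquad ⟨hcq, h'.qCoord_lt_one.le⟩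
      ⟨hcq.trans hq.le, h.qCoord_lt_one.le⟩ hq
  have hsum := reducedSum_lt_reducedSum (h.Ufun_div_Vfun_pos (hφ.trans_lt hφ'))
    (h'.Ufun_div_Vfun_pos hφ').le h'.qCoord_pos hq.le h.qCoord_lt_one hr
  rw [h.Eq1_eq, h'.Eq1_eq]
  linarith

theorem Eq1_neg_of_lowerSumQ {R Q Φ : ℚ} (h : Admissible φ β) (hR : 0 < R) (hQ : Q ≤ 1)
    (hq : qCoord φ β ≤ Q) (hr : R * Q ≤ Ufun φ β / Vfun φ β * qCoord φ β) (hΦ : Φ ≤ φ)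
    (hnum : KtildeQ - lowerSumQ R Q < 742000 * 13.518 * Φ) : Eq1 φ β < 0 := by
  have hR' : (0 : ℝ) < R := by exact_mod_cast hR
  have hr0 : 0 < Ufun φ β / Vfun φ β :=
    (mul_pos_iff_of_pos_right h.qCoord_pos).1
      ((mul_pos hR' (h.qCoord_pos.trans_le hq)).trans_le hr)
  have hsum := exp_mul_lowerSumQ_le_reducedSum hR.le hQ hr0.le h.qCoord_pos hq hr
  have hnum' : (KtildeQ - lowerSumQ R Q : ℝ) < 742000 * 13.518 * Φ := by
    have := (Rat.cast_lt (K := ℝ)).2 hnum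
    push_cast at this
    exact this
  have hexp : 742000 * Real.exp (-13.518) < 1 := by
    rw [Real.exp_neg, ← div_eq_mul_inv]
    exact (div_lt_one (Real.exp_pos _)).2 lt_exp_lambda
  have hφ : 0 < φ := by linarith [h.phi_gt]
  rw [h.Eq1_eq, Ktilde_eq]
  calc Real.exp (-13.518) * KtildeQ - 13.518 * φ - reducedSum _ _
      ≤ Real.exp (-13.518) * (KtildeQ - lowerSumQ R Q) - 13.518 * φ := by linarith
    _ ≤ Real.exp (-13.518) * (742000 * 13.518 * φ) - 13.518 * φ := by
      gcongr
      linarith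
    _ = (742000 * Real.exp (-13.518) - 1) * (13.518 * φ) := by ring
    _ < 0 := mul_neg_of_neg_of_pos (sub_neg.2 hexp) (by positivity)

theorem Eq1_neg_of_cubic {R Q Φ : ℚ} (h : Admissible φ β) (ha : 0 ≤ a) (hb : 0 ≤ b)
    (hcubic : Ufun φ β / Vfun φ β * qCoord φ β =
      (a + b * qCoord φ β) * (1 - qCoord φ β) ^ 2)
    (hR : 0 < R) (hQ : Q ≤ 1) (hq : qCoord φ β ≤ Q)
    (hQa : (a + b * Q) * (1 - Q) ^ 2 ≤ a) (hRQ : R * Q ≤ (a + b * Q) * (1 - Q : ℝ) ^ 2)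
    (hΦ : Φ ≤ φ) (hnum : KtildeQ - lowerSumQ R Q < 742000 * 13.518 * Φ) : Eq1 φ β < 0 := by
  refine Eq1_neg_of_lowerSumQ h hR hQ hq ?_ hΦ hnum
  rw [hcubic]
  exact hRQ.trans (cubic_le_cubic_of_le_value_zero ha hb h.qCoord_pos.le hq
    (by exact_mod_cast hQ) hQa)

end Comparison

section FixedPhi

variable {φ β : ℝ}

theorem Eq1_strictAntiOn_beta {c : ℝ} (hφ : φ < 1) (hc : 0 ≤ c) (hquad : 1 ≤ 2 * c * (1 + c)) :
    StrictAntiOn (fun β => Eq1 φ β) {β | Admissible φ β ∧ c ≤ qCoord φ β} := by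
  rintro s ⟨hs, -⟩ t ⟨ht, hct⟩ hst
  have hA : 0 < (1 - φ) / (3 * φ - 1) := div_pos (by linarith) (by linarith [hs.phi_gt])
  refine Eq1_lt_Eq1_of_cubic hs ht le_rfl hφ (qCoord_strictAntiOn_beta hs ht hst) hct
    (mul_pos two_pos hA) hA.le hc ?_ hs.Ufun_div_Vfun_mul_qCoord_eq_cubic_of_phi
    ht.Ufun_div_Vfun_mul_qCoord_eq_cubic_of_phi
  linarith [mul_nonneg hA.le (sub_nonneg.2 hquad)]

theorem Eq1_neg_of_qCoord_le_of_phi (h : Admissible φ β) (hφ : 0.525245 ≤ φ)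
    (hφ' : φ ≤ 0.619063) (hq : qCoord φ β ≤ 0.367) : Eq1 φ β < 0 := by
  have hA : 0.4444 ≤ (1 - φ) / (3 * φ - 1) := by
    rw [le_div_iff₀ (by linarith)]
    linarith
  refine Eq1_neg_of_cubic (R := 1.148) (Q := 0.367) (Φ := 0.525245) h (by linarith)
    (by linarith) h.Ufun_div_Vfun_mul_qCoord_eq_cubic_of_phi (by norm_num) (by norm_num) ?_ ?_ ?_ ?_
    (by decide +kernel)
  all_goals
    push_cast
    linarith

end FixedPhi

section FixedBeta

variable {φ β : ℝ}

theorem two_mul_div_mono {l : ℝ} (hl : l ≤ β) (hβ : β < 1) :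
    2 * l / (3 * (1 - l)) ≤ 2 * β / (3 * (1 - β)) := by
  rw [div_le_div_iff₀ (by linarith) (by linarith)]
  linarith

theorem Eq1_strictAntiOn_phi (hβ : 0.33018 ≤ β) :
    StrictAntiOn (fun φ => Eq1 φ β) {φ | Admissible φ β ∧ 0.46 ≤ qCoord φ β} := by
  rintro s ⟨hs, -⟩ t ⟨ht, hct⟩ hst
  have hB : 0.3286 ≤ 2 * β / (3 * (1 - β)) :=
    le_trans (by norm_num) (two_mul_div_mono hβ hs.beta_lt_one)
  refine Eq1_lt_Eq1_of_cubic hs ht hst.le (by linarith [ht.beta2_pos])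
    (qCoord_strictAntiOn_phi hs ht hst) hct (by linarith) (by linarith) (by norm_num) ?_
    hs.Ufun_div_Vfun_mul_qCoord_eq_cubic_of_beta ht.Ufun_div_Vfun_mul_qCoord_eq_cubic_of_beta
  linarith

theorem Eq1_neg_of_qCoord_le_of_beta_ge {l : ℝ} {R Φ : ℚ} (h : Admissible φ β)
    (hq : qCoord φ β ≤ 0.46) (hl : 0.33018 ≤ l) (hlβ : l ≤ β) (hR : 0 < R)
    (hRl : R * 0.46 ≤
      (2 * l / (3 * (1 - l)) + (1 + 2 * (2 * l / (3 * (1 - l)))) * 0.46) * (1 - 0.46 : ℝ) ^ 2)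
    (hΦ : Φ ≤ φ) (hnum : KtildeQ - lowerSumQ R 0.46 < 742000 * 13.518 * Φ) : Eq1 φ β < 0 := by
  have hlβ' := two_mul_div_mono hlβ h.beta_lt_one
  have hB : 0.3286 ≤ 2 * β / (3 * (1 - β)) :=
    le_trans (by norm_num) (two_mul_div_mono (hl.trans hlβ) h.beta_lt_one)
  refine Eq1_neg_of_cubic h (by linarith) (by linarith)
    h.Ufun_div_Vfun_mul_qCoord_eq_cubic_of_beta hR (by norm_num) ?_ ?_ ?_ hΦ hnum
  all_goals
    push_cast
    linarith

theorem Eq1_neg_of_qCoord_le_of_beta (h : Admissible φ β) (hβ : 0.33018 ≤ β)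
    (hβ' : β ≤ 0.52891) (hq : qCoord φ β ≤ 0.46) : Eq1 φ β < 0 := by
  have hφ : 4.38 - 2.46 * β ≤ 5.76 * φ := by
    have := (div_le_iff₀ h.denom_pos).1 hq
    linarith
  rcases le_total β 0.4 with h₁ | h₁
  · exact Eq1_neg_of_qCoord_le_of_beta_ge (R := 0.69) (Φ := 0.5895) h hq le_rfl hβ
      (by norm_num) (by norm_num) (by norm_num; linarith) (by decide +kernel)
  rcases le_total β 0.44 with h₂ | h₂
  · exact Eq1_neg_of_qCoord_le_of_beta_ge (R := 0.83) (Φ := 0.57245) h hq (by norm_num) h₁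
      (by norm_num) (by norm_num) (by norm_num; linarith) (by decide +kernel)
  rcases le_total β 0.48 with h₃ | h₃
  · exact Eq1_neg_of_qCoord_le_of_beta_ge (R := 0.928) (Φ := 0.5554) h hq (by norm_num) h₂
      (by norm_num) (by norm_num) (by norm_num; linarith) (by decide +kernel)
  · exact Eq1_neg_of_qCoord_le_of_beta_ge (R := 1.04) (Φ := 0.5345) h hq (by norm_num) h₃
      (by norm_num) (by norm_num) (by norm_num; linarith) (by decide +kernel)

end FixedBeta

/-- decreasing-then-negative behaviour of the first equation in each
variable.  (i) For fixed `φ ∈ [0.525245, 0.619063]`, on `I_φ = (2 − 3φ, 3(1 − φ)/2)`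
there is `β₁^♦ ∈ I_φ` with `Eq₁(φ, ·)` strictly decreasing on `(2 − 3φ, β₁^♦]` and
negative on `[β₁^♦, 3(1 − φ)/2)`; in particular every zero of `Eq₁(φ, ·)` in `I_φ` is
`< β₁^♦`.  (ii) Symmetrically in `φ` for fixed `β₁ ∈ [0.33018, 0.52891]` on
`J_{β₁} = ((2 − β₁)/3, 1 − 2β₁/3)`. -/
theorem Eq1_decreasing_then_negative :
    (∀ φ : ℝ, 0.525245 ≤ φ → φ ≤ 0.619063 →
        ∃ b ∈ Set.Ioo (2 - 3 * φ) (3 * (1 - φ) / 2),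
          StrictAntiOn (fun t => Eq1 φ t) (Set.Ioc (2 - 3 * φ) b) ∧
            (∀ t ∈ Set.Ico b (3 * (1 - φ) / 2), Eq1 φ t < 0) ∧
            (∀ t ∈ Set.Ioo (2 - 3 * φ) (3 * (1 - φ) / 2), Eq1 φ t = 0 → t < b)) ∧
      (∀ β₁ : ℝ, 0.33018 ≤ β₁ → β₁ ≤ 0.52891 →
        ∃ a ∈ Set.Ioo ((2 - β₁) / 3) (1 - 2 * β₁ / 3),
          StrictAntiOn (fun t => Eq1 t β₁) (Set.Ioc ((2 - β₁) / 3) a) ∧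
            (∀ t ∈ Set.Ico a (1 - 2 * β₁ / 3), Eq1 t β₁ < 0) ∧
            (∀ t ∈ Set.Ioo ((2 - β₁) / 3) (1 - 2 * β₁ / 3), Eq1 t β₁ = 0 → t < a)) := by
  refine ⟨fun φ hφ hφ' => ?_, fun β hβ hβ' => ?_⟩
  · have hb := betaOfQ_mem_Ioo (φ := φ) (c := 0.367) (by linarith) (by norm_num) (by norm_num)
    have hneg : ∀ t ∈ Set.Ico (betaOfQ φ 0.367) (3 * (1 - φ) / 2), Eq1 φ t < 0 := fun t ht =>
      have h : Admissible φ t := admissible_iff_beta_mem_Ioo.2 ⟨hb.1.trans_le ht.1, ht.2⟩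
      Eq1_neg_of_qCoord_le_of_phi h hφ hφ' ((h.qCoord_le_iff_betaOfQ_le (by norm_num)).2 ht.1)
    refine ⟨_, hb, (Eq1_strictAntiOn_beta (c := 0.367) (by linarith) (by norm_num)
      (by norm_num)).mono fun t ht => ?_, hneg, fun t ht h0 =>
        lt_of_not_ge fun hbt => (hneg t ⟨hbt, ht.2⟩).ne h0⟩
    have h : Admissible φ t := admissible_iff_beta_mem_Ioo.2 ⟨ht.1, ht.2.trans_lt hb.2⟩
    exact ⟨h, (h.le_qCoord_iff_le_betaOfQ (by norm_num)).2 ht.2⟩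
  · have ha := phiOfQ_mem_Ioo (β := β) (c := 0.46) (by linarith) (by norm_num) (by norm_num)
    have hneg : ∀ t ∈ Set.Ico (phiOfQ β 0.46) (1 - 2 * β / 3), Eq1 t β < 0 := fun t ht =>
      have h : Admissible t β := admissible_iff_phi_mem_Ioo.2 ⟨ha.1.trans_le ht.1, ht.2⟩
      Eq1_neg_of_qCoord_le_of_beta h hβ hβ' ((h.qCoord_le_iff_phiOfQ_le (by norm_num)).2 ht.1)
    refine ⟨_, ha, (Eq1_strictAntiOn_phi hβ).mono fun t ht => ?_, hneg, fun t ht h0 =>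
      lt_of_not_ge fun hat => (hneg t ⟨hat, ht.2⟩).ne h0⟩
    have h : Admissible t β := admissible_iff_phi_mem_Ioo.2 ⟨ht.1, ht.2.trans_lt ha.2⟩
    exact ⟨h, (h.le_qCoord_iff_le_phiOfQ (by norm_num)).2 ht.2⟩
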